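/- Quantitative tightness construction: for every integer q ≥ 1, consider machine types with costs c_k = 2^k and capacities B_k = 2^k for 0 ≤ k ≤ q and B_k = 2^{q+k} for k ≥ q+1 (which are strictly increasing with non-increasing cost-per-job 2^k/B_k). There exist a finite instance J of unit-length jobs, a valid interval assignment 𝒜 for J with Σ_{(I,t_I,J_I)∈𝒜} 2^{t_I} = 2^{2q+3} − 2^q, and a valid schedule for J of cost 2^{2q+1} + 2^{q+1}; in particular OPT(J) ≤ 2^{2q+1} + 2^{q+1}. -/

import Mathlib

structure SchedInstance where
  jobs : Finset ℕ
  r : ℕ → ℤ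
  d : ℕ → ℤ
  window : ∀ j ∈ jobs, r j ≤ d j

structure Batch where
  btype : ℕ
  time : ℤ
  bjobs : Finset ℕ
deriving DecidableEq

def ValidSchedule (B : ℕ → ℕ) (P : SchedInstance) (S : Finset Batch) : Prop :=
  (∀ X ∈ S, X.bjobs.card ≤ B X.btype) ∧
  (∀ X ∈ S, ∀ j ∈ X.bjobs, j ∈ P.jobs ∧ P.r j ≤ X.time ∧ X.time ≤ P.d j) ∧
  (∀ X ∈ S, ∀ Y ∈ S, X ≠ Y → Disjoint X.bjobs Y.bjobs) ∧
  (∀ j ∈ P.jobs, ∃ X ∈ S, j ∈ X.bjobs)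

noncomputable def schedCost (c : ℕ → ℝ) (S : Finset Batch) : ℝ :=
  ∑ X ∈ S, c X.btype

noncomputable def OPT (c : ℕ → ℝ) (B : ℕ → ℕ) (P : SchedInstance) : ℝ :=
  sInf {x : ℝ | ∃ S : Finset Batch, ValidSchedule B P S ∧ schedCost c S = x}

structure IAItem where
  lo : ℤ
  hi : ℤ
  itype : ℕ
  ijobs : Finset ℕ
deriving DecidableEq

def ValidAssignment (B : ℕ → ℕ) (P : SchedInstance) (A : Finset IAItem) : Prop :=
  (∀ e ∈ A, if e.itype = 0 then e.ijobs.card = 1 else e.ijobs.card = B (e.itype - 1)) ∧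
  (∀ e ∈ A, ∀ j ∈ e.ijobs, j ∈ P.jobs ∧ e.lo ≤ P.r j ∧ P.d j ≤ e.hi) ∧
  (∀ e ∈ A, ∀ e' ∈ A, e ≠ e' → e.itype = e'.itype →
      Set.Icc e.lo e.hi ∩ Set.Icc e'.lo e'.hi = ∅) ∧
  (∀ e ∈ A, ∀ e' ∈ A, e ≠ e' → Disjoint e.ijobs e'.ijobs)

/-- The capacities of the quantitative tightness construction:
`B k = 2^k` for `k ≤ q` and `B k = 2^(q+k)` for `k ≥ q + 1`. -/
def Bq (q : ℕ) : ℕ → ℕ := fun k => if k ≤ q then 2 ^ k else 2 ^ (q + k)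

theorem Bq_of_lt {q k : ℕ} (h : q < k) : Bq q k = 2 ^ (q + k) :=
  if_neg h.not_ge

theorem Bq_pos (q k : ℕ) : 0 < Bq q k := by
  unfold Bq
  split_ifs <;> positivity

theorem Bq_strictMono (q : ℕ) : StrictMono (Bq q) := by
  refine strictMono_nat_of_lt_succ fun k => ?_
  unfold Bq
  split_ifs <;> first | omega | exact Nat.pow_lt_pow_right (by norm_num) (by omega)

theorem two_mul_Bq_le (q k : ℕ) : 2 * Bq q k ≤ Bq q (k + 1) := by
  unfold Bq
  split_ifs
  any_goals omega
  all_goals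
    rw [← pow_succ']
    exact Nat.pow_le_pow_right (by norm_num) (by omega)

theorem cost_per_job_antitone (q k : ℕ) :
    (2 : ℝ) ^ (k + 1) / (Bq q (k + 1) : ℝ) ≤ (2 : ℝ) ^ k / (Bq q k : ℝ) := by
  have h0 : (0 : ℝ) < Bq q k := by exact_mod_cast Bq_pos q k
  have h1 : (0 : ℝ) < Bq q (k + 1) := by exact_mod_cast Bq_pos q (k + 1)
  have h2 : (2 : ℝ) * Bq q k ≤ Bq q (k + 1) := by exact_mod_cast two_mul_Bq_le q k
  rw [div_le_div_iff₀ h1 h0, pow_succ, mul_assoc]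
  exact mul_le_mul_of_nonneg_left h2 (by positivity)

theorem OPT_le_schedCost {c : ℕ → ℝ} (hc : ∀ k, 0 ≤ c k) {B : ℕ → ℕ} {P : SchedInstance}
    {S : Finset Batch} (hS : ValidSchedule B P S) : OPT c B P ≤ schedCost c S := by
  refine csInf_le ⟨0, ?_⟩ ⟨S, hS, rfl⟩
  rintro x ⟨T, -, rfl⟩
  exact Finset.sum_nonneg fun X _ => hc X.btype

namespace TightInstance

/-- The capacity of a machine of type `q + 1`. -/
def cap (q : ℕ) : ℕ := 2 ^ (2 * q + 1)

/-- The jobs that can only run at one time: the first `2 ^ (q + 1)` jobs of each of the first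
`2 ^ q` blocks of length `cap q`. -/
def rigidJobs (q : ℕ) : Finset ℕ :=
  (Finset.range (2 ^ q)).biUnion fun i => Finset.Ico (i * cap q) (i * cap q + 2 ^ (q + 1))

/-- The instance: `2 ^ q + 1` blocks of `cap q` jobs; a rigid job runs at the index of its block,
every other job at any time in `[0, 2 ^ q - 1]`. -/
def inst (q : ℕ) : SchedInstance where
  jobs := Finset.range ((2 ^ q + 1) * cap q)
  r j := if j ∈ rigidJobs q then (j / cap q : ℕ) else 0
  d j := if j ∈ rigidJobs q then (j / cap q : ℕ) else 2 ^ q - 1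
  window j _ := by
    split_ifs
    · exact le_rfl
    · have : (0 : ℤ) < 2 ^ q := by positivity
      omega

/-- The batch of type `q + 1` running the `b`-th block of jobs. -/
def batch (q b : ℕ) : Batch where
  btype := q + 1
  time := if b < 2 ^ q then b else 0
  bjobs := Finset.Ico (b * cap q) (b * cap q + cap q)

/-- The interval `[i, i]` of type `t`. -/
def pointItem (q : ℕ) (p : ℕ × ℕ) : IAItem where
  lo := p.1
  hi := p.1
  itype := p.2
  ijobs := Finset.Ico (p.1 * cap q + 2 ^ p.2 / 2) (p.1 * cap q + 2 ^ p.2)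

/-- The interval `[0, 2 ^ q - 1]` of type `2 * q + 2`, containing all non-rigid jobs. -/
def wideItem (q : ℕ) : IAItem where
  lo := 0
  hi := 2 ^ q - 1
  itype := 2 * q + 2
  ijobs := (inst q).jobs \ rigidJobs q

def schedule (q : ℕ) : Finset Batch := (Finset.range (2 ^ q + 1)).image (batch q)

def pointItems (q : ℕ) : Finset IAItem :=
  (Finset.range (2 ^ q) ×ˢ Finset.range (q + 2)).image (pointItem q)

def assignment (q : ℕ) : Finset IAItem := insert (wideItem q) (pointItems q)

theorem cap_pos (q : ℕ) : 0 < cap q := by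
  unfold cap
  positivity

theorem two_pow_le_cap (q : ℕ) : 2 ^ (q + 1) ≤ cap q :=
  Nat.pow_le_pow_right (by norm_num) (by omega)

theorem mem_rigidJobs {q j : ℕ} :
    j ∈ rigidJobs q ↔ ∃ i < 2 ^ q, i * cap q ≤ j ∧ j < i * cap q + 2 ^ (q + 1) := by
  simp [rigidJobs]

theorem mul_cap_add_le {q i n : ℕ} (h : i < n) : i * cap q + cap q ≤ n * cap q := by
  rw [← Nat.succ_mul]
  exact Nat.mul_le_mul_right _ h

theorem div_cap_eq {q i j : ℕ} (h₁ : i * cap q ≤ j) (h₂ : j < i * cap q + cap q) :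
    j / cap q = i :=
  Nat.div_eq_of_lt_le h₁ (by rwa [Nat.succ_mul])

theorem rigidJobs_subset_jobs (q : ℕ) : rigidJobs q ⊆ (inst q).jobs := by
  intro j hj
  obtain ⟨i, hi, -, h⟩ := mem_rigidJobs.1 hj
  have h₁ := two_pow_le_cap q
  have h₂ := mul_cap_add_le (q := q) (n := 2 ^ q + 1) (by omega : i < 2 ^ q + 1)
  exact Finset.mem_range.2 (by omega)

theorem card_rigidJobs (q : ℕ) : (rigidJobs q).card = 2 ^ q * 2 ^ (q + 1) := by
  rw [rigidJobs, Finset.card_biUnion]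
  · simp
  · intro i _ i' _ hne
    refine Finset.disjoint_left.2 fun j h h' => hne ?_
    rw [Finset.mem_Ico] at h h'
    have h₁ := two_pow_le_cap q
    rw [← div_cap_eq h.1 (by omega), div_cap_eq h'.1 (by omega)]

theorem card_wideItem (q : ℕ) : (wideItem q).ijobs.card = 2 ^ (3 * q + 1) := by
  rw [wideItem, Finset.card_sdiff_of_subset (rigidJobs_subset_jobs q), card_rigidJobs]
  simp only [inst, Finset.card_range, cap]
  refine Nat.sub_eq_of_eq_add ?_
  ring

theorem batch_injective (q : ℕ) : Function.Injective (batch q) := by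
  intro b b' h
  have h₀ := cap_pos q
  have hb : b * cap q ∈ (batch q b').bjobs := by
    rw [← h]
    simp [batch, h₀]
  simp only [batch, Finset.mem_Ico] at hb
  rw [← div_cap_eq hb.1 hb.2, Nat.mul_div_cancel _ h₀]

theorem pointItem_injective (q : ℕ) : Function.Injective (pointItem q) := by
  rintro ⟨i, t⟩ ⟨i', t'⟩ h
  simp only [pointItem, IAItem.mk.injEq, Nat.cast_inj] at h
  exact Prod.ext h.1 h.2.2.1

theorem mem_pointItems {q : ℕ} {e : IAItem} :
    e ∈ pointItems q ↔ ∃ i < 2 ^ q, ∃ t < q + 2, e = pointItem q (i, t) := by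
  simp only [pointItems, Finset.mem_image, Finset.mem_product, Finset.mem_range, Prod.exists]
  constructor
  · rintro ⟨i, t, ⟨hi, ht⟩, rfl⟩
    exact ⟨i, hi, t, ht, rfl⟩
  · rintro ⟨i, hi, t, ht, rfl⟩
    exact ⟨i, t, ⟨hi, ht⟩, rfl⟩

theorem wideItem_notMem_pointItems (q : ℕ) : wideItem q ∉ pointItems q := by
  intro h
  obtain ⟨i, _, t, ht, h⟩ := mem_pointItems.1 h
  have : 2 * q + 2 = t := congrArg IAItem.itype h
  omega

theorem bounds_of_mem_pointItem {q i t j : ℕ} (ht : t < q + 2)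
    (hj : j ∈ (pointItem q (i, t)).ijobs) :
    i * cap q ≤ j ∧ j < i * cap q + 2 ^ (q + 1) := by
  simp only [pointItem, Finset.mem_Ico] at hj
  have : 2 ^ t ≤ 2 ^ (q + 1) := Nat.pow_le_pow_right (by norm_num) (by omega)
  omega

theorem mem_rigidJobs_of_mem_pointItem {q i t j : ℕ} (hi : i < 2 ^ q) (ht : t < q + 2)
    (hj : j ∈ (pointItem q (i, t)).ijobs) : j ∈ rigidJobs q :=
  mem_rigidJobs.2 ⟨i, hi, bounds_of_mem_pointItem ht hj⟩

theorem div_cap_of_mem_pointItem {q i t j : ℕ} (ht : t < q + 2)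
    (hj : j ∈ (pointItem q (i, t)).ijobs) : j / cap q = i := by
  have h := bounds_of_mem_pointItem ht hj
  have h₁ := two_pow_le_cap q
  exact div_cap_eq h.1 (by omega)

theorem disjoint_wideItem_pointItem {q i t : ℕ} (hi : i < 2 ^ q) (ht : t < q + 2) :
    Disjoint (wideItem q).ijobs (pointItem q (i, t)).ijobs :=
  Finset.disjoint_left.2 fun _ h h' =>
    (Finset.mem_sdiff.1 h).2 (mem_rigidJobs_of_mem_pointItem hi ht h')

theorem disjoint_pointItem_of_lt {q i t t' : ℕ} (h : t < t') :
    Disjoint (pointItem q (i, t)).ijobs (pointItem q (i, t')).ijobs := by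
  refine Finset.disjoint_left.2 fun j hj hj' => ?_
  simp only [pointItem, Finset.mem_Ico] at hj hj'
  obtain ⟨s, rfl⟩ : ∃ s, t' = s + 1 := ⟨t' - 1, by omega⟩
  have h₁ : 2 ^ t ≤ 2 ^ s := Nat.pow_le_pow_right (by norm_num) (by omega)
  rw [pow_succ] at hj'
  omega

theorem disjoint_pointItem {q i t i' t' : ℕ} (ht : t < q + 2) (ht' : t' < q + 2)
    (h : pointItem q (i, t) ≠ pointItem q (i', t')) :
    Disjoint (pointItem q (i, t)).ijobs (pointItem q (i', t')).ijobs := by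
  by_cases hi : i = i'
  · subst hi
    rcases lt_trichotomy t t' with hlt | rfl | hlt
    · exact disjoint_pointItem_of_lt hlt
    · exact absurd rfl h
    · exact (disjoint_pointItem_of_lt hlt).symm
  · exact Finset.disjoint_left.2 fun j hj hj' =>
      hi ((div_cap_of_mem_pointItem ht hj).symm.trans (div_cap_of_mem_pointItem ht' hj'))

theorem card_pointItem {q i t : ℕ} (ht : t < q + 2) :
    if t = 0 then (pointItem q (i, t)).ijobs.card = 1
    else (pointItem q (i, t)).ijobs.card = Bq q (t - 1) := by
  rcases t with _ | s
  · simp [pointItem]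
  · have hs : s ≤ q := by omega
    simp only [pointItem, Nat.card_Ico, Nat.add_one_ne_zero, if_false, Nat.add_sub_cancel, Bq, hs,
      if_true, pow_succ]
    omega

theorem validAssignment (q : ℕ) : ValidAssignment (Bq q) (inst q) (assignment q) := by
  refine ⟨?_, ?_, ?_, ?_⟩
  · intro e he
    rcases Finset.mem_insert.1 he with rfl | he
    · rw [card_wideItem]
      refine (if_neg (Nat.add_one_ne_zero _)).mpr ?_
      rw [show (wideItem q).itype - 1 = 2 * q + 1 from rfl, Bq_of_lt (by omega)]
      congr 1
      omega
    · obtain ⟨i, _, t, ht, rfl⟩ := mem_pointItems.1 he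
      exact card_pointItem ht
  · intro e he j hj
    rcases Finset.mem_insert.1 he with rfl | he
    · obtain ⟨hj, hr⟩ := Finset.mem_sdiff.1 hj
      refine ⟨hj, ?_⟩
      simp [inst, wideItem, hr]
    · obtain ⟨i, hi, t, ht, rfl⟩ := mem_pointItems.1 he
      have hr := mem_rigidJobs_of_mem_pointItem hi ht hj
      refine ⟨rigidJobs_subset_jobs q hr, ?_⟩
      simp only [inst, hr, if_true, div_cap_of_mem_pointItem ht hj]
      exact ⟨le_rfl, le_rfl⟩
  · intro e he e' he' hne htype
    rcases Finset.mem_insert.1 he with rfl | he <;> rcases Finset.mem_insert.1 he' with rfl | he'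
    · exact absurd rfl hne
    · obtain ⟨i, _, t, ht, rfl⟩ := mem_pointItems.1 he'
      simp only [wideItem, pointItem] at htype
      omega
    · obtain ⟨i, _, t, ht, rfl⟩ := mem_pointItems.1 he
      simp only [wideItem, pointItem] at htype
      omega
    · obtain ⟨i, _, t, _, rfl⟩ := mem_pointItems.1 he
      obtain ⟨i', _, t', _, rfl⟩ := mem_pointItems.1 he'
      obtain rfl : t = t' := htype
      have hi : i ≠ i' := by
        rintro rfl
        exact hne rfl
      simpa [pointItem] using hi.symm
  · intro e he e' he' hne
    rcases Finset.mem_insert.1 he with rfl | he <;> rcases Finset.mem_insert.1 he' with rfl | he'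
    · exact absurd rfl hne
    · obtain ⟨i, hi, t, ht, rfl⟩ := mem_pointItems.1 he'
      exact disjoint_wideItem_pointItem hi ht
    · obtain ⟨i, hi, t, ht, rfl⟩ := mem_pointItems.1 he
      exact (disjoint_wideItem_pointItem hi ht).symm
    · obtain ⟨i, _, t, ht, rfl⟩ := mem_pointItems.1 he
      obtain ⟨i', _, t', ht', rfl⟩ := mem_pointItems.1 he'
      exact disjoint_pointItem ht ht' hne

theorem sum_assignment (q : ℕ) :
    ∑ e ∈ assignment q, (2 : ℝ) ^ e.itype = 2 ^ (2 * q + 3) - 2 ^ q := by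
  rw [assignment, Finset.sum_insert (wideItem_notMem_pointItems q), pointItems,
    Finset.sum_image (pointItem_injective q).injOn, Finset.sum_product]
  simp only [pointItem, wideItem, Finset.sum_const, Finset.card_range, nsmul_eq_mul]
  rw [geom_sum_eq (by norm_num)]
  push_cast
  ring

theorem validSchedule (q : ℕ) : ValidSchedule (Bq q) (inst q) (schedule q) := by
  refine ⟨?_, ?_, ?_, ?_⟩
  · intro X hX
    obtain ⟨b, _, rfl⟩ := Finset.mem_image.1 hX
    rw [show (batch q b).btype = q + 1 from rfl, Bq_of_lt (Nat.lt_succ_self q)]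
    simp only [batch, Nat.card_Ico, Nat.add_sub_cancel_left, cap]
    exact Nat.pow_le_pow_right (by norm_num) (by omega)
  · intro X hX j hj
    obtain ⟨b, hb, rfl⟩ := Finset.mem_image.1 hX
    have hb' := Finset.mem_range.1 hb
    simp only [batch, Finset.mem_Ico] at hj
    have hdiv := div_cap_eq hj.1 hj.2
    refine ⟨Finset.mem_range.2 (hj.2.trans_le (mul_cap_add_le hb')), ?_⟩
    by_cases hr : j ∈ rigidJobs q
    · obtain ⟨i, hi, h₁, h₂⟩ := mem_rigidJobs.1 hr
      have hbi : b = i := hdiv.symm.trans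
        (div_cap_eq h₁ (h₂.trans_le (Nat.add_le_add_left (two_pow_le_cap q) _)))
      subst hbi
      simp only [inst, batch, hr, hdiv, hi, if_true, le_refl, and_self]
    · have hpos : (0 : ℤ) < 2 ^ q := by positivity
      simp only [inst, batch, hr, if_false]
      split_ifs with hlt
      · have : (b : ℤ) < 2 ^ q := by exact_mod_cast hlt
        omega
      · omega
  · intro X hX Y hY hne
    obtain ⟨b, _, rfl⟩ := Finset.mem_image.1 hX
    obtain ⟨b', _, rfl⟩ := Finset.mem_image.1 hY
    refine Finset.disjoint_left.2 fun j hj hj' => hne ?_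
    simp only [batch, Finset.mem_Ico] at hj hj'
    rw [← div_cap_eq hj.1 hj.2, div_cap_eq hj'.1 hj'.2]
  · intro j hj
    have hj' := Finset.mem_range.1 hj
    refine ⟨batch q (j / cap q), Finset.mem_image_of_mem _ (Finset.mem_range.2 ?_), ?_⟩
    · exact (Nat.div_lt_iff_lt_mul (cap_pos q)).2 hj'
    · simp only [batch, Finset.mem_Ico]
      exact ⟨Nat.div_mul_le_self _ _, Nat.lt_div_mul_add (cap_pos q)⟩

theorem schedCost_schedule (q : ℕ) :
    schedCost (fun k => (2 : ℝ) ^ k) (schedule q) = 2 ^ (2 * q + 1) + 2 ^ (q + 1) := by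
  rw [schedCost, schedule, Finset.sum_image (batch_injective q).injOn]
  simp only [batch, Finset.sum_const, Finset.card_range, nsmul_eq_mul]
  push_cast
  ring

end TightInstance

/-- the quantitative tightness construction.  For every `q ≥ 1`, the
capacities `Bq q` are strictly increasing with non-increasing cost-per-job, and there
exist an instance `J`, a valid interval assignment `𝒜` with
`∑_{(I,t_I,J_I) ∈ 𝒜} 2^{t_I} = 2^(2q+3) − 2^q`, and a valid schedule of cost
`2^(2q+1) + 2^(q+1)`; in particular `OPT(J) ≤ 2^(2q+1) + 2^(q+1)`. -/
theorem quantitative_tightness_construction (q : ℕ) (hq : 1 ≤ q) :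
    StrictMono (Bq q) ∧
    (∀ k, (2 : ℝ) ^ (k + 1) / (Bq q (k + 1) : ℝ) ≤ (2 : ℝ) ^ k / (Bq q k : ℝ)) ∧
    ∃ (P : SchedInstance) (A : Finset IAItem) (S : Finset Batch),
      ValidAssignment (Bq q) P A ∧
      (∑ e ∈ A, (2 : ℝ) ^ e.itype) = 2 ^ (2 * q + 3) - 2 ^ q ∧
      ValidSchedule (Bq q) P S ∧
      schedCost (fun k => (2 : ℝ) ^ k) S = 2 ^ (2 * q + 1) + 2 ^ (q + 1) ∧
      OPT (fun k => (2 : ℝ) ^ k) (Bq q) P ≤ 2 ^ (2 * q + 1) + 2 ^ (q + 1) := by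
  refine ⟨Bq_strictMono q, cost_per_job_antitone q, TightInstance.inst q,
    TightInstance.assignment q, TightInstance.schedule q, TightInstance.validAssignment q,
    TightInstance.sum_assignment q, TightInstance.validSchedule q,
    TightInstance.schedCost_schedule q, ?_⟩
  rw [← TightInstance.schedCost_schedule q]
  exact OPT_le_schedCost (fun k => by positivity) (TightInstance.validSchedule q)
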